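/- arXiv:2009.14564 — 4 statements merged into one kernel-verified Lean document; each statement's English description precedes it below -/
import Mathlib

section
/- For all real numbers A, B with A ≠ 0 there exists a C^∞ function f̃ : ℝ² → ℝ such that: (i) f̃(x,y) = A·x + B for every point (x,y) outside the open square (−1,1)×(−1,1); (ii) there exist two distinct points p₁, p₂ ∈ (−1,1)×(−1,1) such that the set of critical points of f̃ (the points where the total derivative of f̃ vanishes) is exactly {p₁, p₂}; (iii) the Hessian quadratic form of f̃ at p₁ is negative definite, i.e. p₁ is a non-degenerate local maximum; (iv) the Hessian of f̃ at p₂ is non-degenerate and indefinite, i.e. (∂²f̃/∂x²)(p₂)·(∂²f̃/∂y²)(p₂) − ((∂²f̃/∂x∂y)(p₂))² < 0, so p₂ is a non-degenerate saddle. -/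
/-- The second directional derivative (Hessian bilinear form) of `f : ℝ² → ℝ`
at the point `p`, evaluated on the directions `v`, `w`. -/
noncomputable def hessianForm (f : ℝ × ℝ → ℝ) (p v w : ℝ × ℝ) : ℝ :=
  fderiv ℝ (fun q => fderiv ℝ f q v) p w

/-- The open square `(−1,1) × (−1,1)` in `ℝ²`. -/
def openSquare : Set (ℝ × ℝ) := Set.Ioo (-1 : ℝ) 1 ×ˢ Set.Ioo (-1 : ℝ) 1

/-!
With a bump `ψ` supported in `[-1, 1]`, `ψ 0 = 1`, and `K > 0`, perturb the affine function to
`A x + B + K ψ(x) ψ(y)`. Since `A ≠ 0`, a critical point lies where both `ψ(x)` and `ψ(y)` are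
positive; there the vanishing of the `y`-derivative forces `y = 0`, so `x` is a critical point of
`A x + B + K ψ(x)`, and the Hessian is diagonal with a negative `yy`-entry. For large `K` this
function of one variable has one maximum and one minimum and no other critical point: if `A > 0`,
this is because `ψ'` is negative exactly on `(0, 1)`, where it decreases and then increases back to
`0`; the case `A < 0` follows by reflecting `x`.
-/

section TwoPreimages

open Set

variable {X Y : Type*} [ConditionallyCompleteLinearOrder X] [TopologicalSpace X]
  [OrderTopology X] [DenselyOrdered X] [LinearOrder Y] [TopologicalSpace Y] [OrderClosedTopology Y]

theorem exists_eq_iff_of_strictAntiOn_of_strictMonoOn {g : X → Y} {l m r : X} {c : Y}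
    (hlm : l ≤ m) (hmr : m ≤ r) (hg : ContinuousOn g (Icc l r)) (hanti : StrictAntiOn g (Icc l m))
    (hmono : StrictMonoOn g (Icc m r)) (hm : g m < c) (hl : c < g l) (hr : c < g r) :
    ∃ a ∈ Ioo l m, ∃ b ∈ Ioo m r, ∀ x ∈ Icc l r, g x = c ↔ x = a ∨ x = b := by
  obtain ⟨a, ha, hga⟩ :=
    intermediate_value_Ioo' hlm (hg.mono (Icc_subset_Icc_right hmr)) ⟨hm, hl⟩
  obtain ⟨b, hb, hgb⟩ :=
    intermediate_value_Ioo hmr (hg.mono (Icc_subset_Icc_left hlm)) ⟨hm, hr⟩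
  refine ⟨a, ha, b, hb, fun x hx => ⟨fun hgx => ?_, by rintro (rfl | rfl) <;> assumption⟩⟩
  rcases le_total x m with hxm | hmx
  · exact .inl (hanti.injOn ⟨hx.1, hxm⟩ (Ioo_subset_Icc_self ha) (hgx.trans hga.symm))
  · exact .inr (hmono.injOn ⟨hmx, hx.2⟩ (Ioo_subset_Icc_self hb) (hgx.trans hgb.symm))

end TwoPreimages

section ProfileSum

/-- The function `(x, y) ↦ α(x) + φ(x) ψ(y)`: the one-variable function `α` perturbed by `φ`, the
perturbation being modulated in the second variable by `ψ`. -/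
def profileSum (α φ ψ : ℝ → ℝ) (p : ℝ × ℝ) : ℝ := α p.1 + φ p.1 * ψ p.2

variable {α φ ψ : ℝ → ℝ}

theorem contDiff_profileSum {n : WithTop ℕ∞} (hα : ContDiff ℝ n α) (hφ : ContDiff ℝ n φ)
    (hψ : ContDiff ℝ n ψ) : ContDiff ℝ n (profileSum α φ ψ) := by
  unfold profileSum
  fun_prop

theorem differentiable_profileSum (hα : Differentiable ℝ α) (hφ : Differentiable ℝ φ)
    (hψ : Differentiable ℝ ψ) : Differentiable ℝ (profileSum α φ ψ) := by
  unfold profileSum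
  fun_prop

theorem fderiv_profileSum (hα : Differentiable ℝ α) (hφ : Differentiable ℝ φ)
    (hψ : Differentiable ℝ ψ) (p v : ℝ × ℝ) :
    fderiv ℝ (profileSum α φ ψ) p v =
      (deriv α p.1 + deriv φ p.1 * ψ p.2) * v.1 + φ p.1 * deriv ψ p.2 * v.2 := by
  have hα' := (hα p.1).hasDerivAt.comp_hasFDerivAt p (hasFDerivAt_fst (𝕜 := ℝ))
  have hφ' := (hφ p.1).hasDerivAt.comp_hasFDerivAt p (hasFDerivAt_fst (𝕜 := ℝ))
  have hψ' := (hψ p.2).hasDerivAt.comp_hasFDerivAt p (hasFDerivAt_snd (𝕜 := ℝ))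
  have h : HasFDerivAt (profileSum α φ ψ) _ p := hα'.add (hφ'.mul hψ')
  rw [h.fderiv]
  simp
  ring

theorem setOf_fderiv_profileSum_eq_zero (hα : Differentiable ℝ α) (hφ : Differentiable ℝ φ)
    (hψ : Differentiable ℝ ψ) (hα₀ : ∀ x, deriv α x ≠ 0) (hφ₀ : ∀ x, φ x = 0 → deriv φ x = 0)
    {y₀ : ℝ} (hy₀ : deriv ψ y₀ = 0) (hψ₀ : ∀ y, deriv ψ y = 0 → ψ y = 0 ∨ y = y₀) :
    {p | fderiv ℝ (profileSum α φ ψ) p = 0} =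
      {x | deriv α x + deriv φ x * ψ y₀ = 0} ×ˢ {y₀} := by
  ext ⟨x, y⟩
  have hgrad := fderiv_profileSum hα hφ hψ (x, y)
  simp only [Set.mem_ofPred_eq, Set.mem_prod, Set.mem_singleton_iff]
  constructor
  · intro hcrit
    have hx : deriv α x + deriv φ x * ψ y = 0 := by simpa [hcrit] using (hgrad (1, 0)).symm
    have hy : φ x = 0 ∨ deriv ψ y = 0 := by simpa [hcrit] using hgrad (0, 1)
    have hprod : deriv φ x * ψ y ≠ 0 := fun h => hα₀ x (by simpa [h] using hx)
    have hφx : φ x ≠ 0 := fun h => left_ne_zero_of_mul hprod (hφ₀ x h)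
    obtain rfl : y = y₀ := (hψ₀ y (hy.resolve_left hφx)).resolve_left (right_ne_zero_of_mul hprod)
    exact ⟨hx, rfl⟩
  · rintro ⟨hx, rfl⟩
    ext <;> simp [hgrad, hx, hy₀]

theorem hessianForm_profileSum (hα : ContDiff ℝ 2 α) (hφ : ContDiff ℝ 2 φ) (hψ : ContDiff ℝ 2 ψ)
    (p v w : ℝ × ℝ) :
    hessianForm (profileSum α φ ψ) p v w =
      (deriv (deriv α) p.1 + deriv (deriv φ) p.1 * ψ p.2) * v.1 * w.1 +
        deriv φ p.1 * deriv ψ p.2 * (v.1 * w.2 + v.2 * w.1) +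
        φ p.1 * deriv (deriv ψ) p.2 * v.2 * w.2 := by
  have hα₁ := hα.differentiable two_ne_zero
  have hφ₁ := hφ.differentiable two_ne_zero
  have hψ₁ := hψ.differentiable two_ne_zero
  have hα₂ := hα.differentiable_deriv_two
  have hφ₂ := hφ.differentiable_deriv_two
  have hψ₂ := hψ.differentiable_deriv_two
  have hsplit : (fun q => fderiv ℝ (profileSum α φ ψ) q v) = fun q =>
      v.1 * profileSum (deriv α) (deriv φ) ψ q + v.2 * profileSum 0 φ (deriv ψ) q := by
    ext q
    rw [fderiv_profileSum hα₁ hφ₁ hψ₁]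
    simp only [profileSum, Pi.zero_apply]
    ring
  have h₁ := differentiable_profileSum hα₂ hφ₂ hψ₁ p
  have h₂ := differentiable_profileSum (differentiable_zero (𝕜 := ℝ)) hφ₁ hψ₂ p
  rw [hessianForm, hsplit, fderiv_fun_add (h₁.const_mul _) (h₂.const_mul _),
    fderiv_const_mul h₁, fderiv_const_mul h₂]
  simp [fderiv_profileSum hα₂ hφ₂ hψ₁,
    fderiv_profileSum (differentiable_zero (𝕜 := ℝ)) hφ₁ hψ₂]
  ring

theorem hessianForm_profileSum_of_deriv_eq_zero (hα : ContDiff ℝ 2 α) (hφ : ContDiff ℝ 2 φ)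
    (hψ : ContDiff ℝ 2 ψ) {y : ℝ} (hy : deriv ψ y = 0) (x : ℝ) (v w : ℝ × ℝ) :
    hessianForm (profileSum α φ ψ) (x, y) v w =
      (deriv (deriv α) x + deriv (deriv φ) x * ψ y) * (v.1 * w.1) +
        φ x * deriv (deriv ψ) y * (v.2 * w.2) := by
  rw [hessianForm_profileSum hα hφ hψ, hy]
  ring

end ProfileSum

theorem mul_self_add_mul_self_neg {R : Type*} [Ring R] [LinearOrder R] [IsStrictOrderedRing R]
    {r s : R} (hr : r < 0) (hs : s < 0) {v : R × R} (hv : v ≠ 0) :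
    r * (v.1 * v.1) + s * (v.2 * v.2) < 0 := by
  by_cases h₁ : v.1 = 0
  · have h₂ : v.2 ≠ 0 := fun h₂ => hv (Prod.ext h₁ h₂)
    simpa [h₁] using mul_neg_of_neg_of_pos hs (mul_self_pos.2 h₂)
  · exact add_neg_of_neg_of_nonpos (mul_neg_of_neg_of_pos hr (mul_self_pos.2 h₁))
      (mul_nonpos_of_nonpos_of_nonneg hs.le (mul_self_nonneg _))

section UnitBump

open Set Polynomial
open scoped ContDiff

/-- The smooth bump `exp (1 - 1 / (1 - x ^ 2))` on `(-1, 1)`, extended by zero; the constant is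
chosen so that it takes the value `1` at the origin. -/
noncomputable def unitBump (x : ℝ) : ℝ := Real.exp 1 * expNegInvGlue (1 - x ^ 2)

theorem contDiff_unitBump {n : ℕ∞} : ContDiff ℝ n unitBump :=
  contDiff_const.mul (expNegInvGlue.contDiff.comp (by fun_prop))

theorem unitBump_zero : unitBump 0 = 1 := by
  simp [unitBump, expNegInvGlue, ← Real.exp_add]

theorem unitBump_nonneg (x : ℝ) : 0 ≤ unitBump x :=
  mul_nonneg (Real.exp_nonneg 1) (expNegInvGlue.nonneg _)

theorem unitBump_pos {x : ℝ} (hx : x ^ 2 < 1) : 0 < unitBump x :=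
  mul_pos (Real.exp_pos 1) (expNegInvGlue.pos_of_pos (sub_pos.2 hx))

theorem unitBump_eq_zero {x : ℝ} (hx : x ∉ Ioo (-1) 1) : unitBump x = 0 := by
  have hx' : 1 ≤ x ^ 2 := by rwa [mem_Ioo, ← abs_lt, not_lt, ← one_le_sq_iff_one_le_abs] at hx
  rw [unitBump, expNegInvGlue.zero_of_nonpos (sub_nonpos.2 hx'), mul_zero]

/-- The polynomial factor lets this rule be applied twice, and since `0⁻¹ = 0` the endpoints `±1`
need no separate treatment. -/
theorem hasDerivAt_eval_inv_mul_unitBump (P : ℝ[X]) (x : ℝ) :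
    HasDerivAt (fun x => P.eval (1 - x ^ 2)⁻¹ * unitBump x)
      (-2 * x * ((X ^ 2 * (P - derivative P)).eval (1 - x ^ 2)⁻¹ * unitBump x)) x := by
  have hinner : HasDerivAt (fun x : ℝ => 1 - x ^ 2) (-(2 * x)) x := by
    simpa using (hasDerivAt_pow 2 x).const_sub 1
  have hglue := (expNegInvGlue.hasDerivAt_polynomial_eval_inv_mul P (1 - x ^ 2)).comp x hinner
  refine ((hglue.const_mul (Real.exp 1)).congr_deriv ?_).congr_of_eventuallyEq
    (.of_forall fun y => ?_)
  · rw [unitBump]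
    ring
  · simp only [unitBump, Function.comp_apply]
    ring

theorem deriv_unitBump (x : ℝ) : deriv unitBump x = -2 * x * ((1 - x ^ 2)⁻¹ ^ 2 * unitBump x) := by
  simpa using (hasDerivAt_eval_inv_mul_unitBump 1 x).deriv

theorem deriv_deriv_unitBump {x : ℝ} (hx : x ^ 2 < 1) :
    deriv (deriv unitBump) x = (6 * x ^ 4 - 2) * ((1 - x ^ 2)⁻¹ ^ 4 * unitBump x) := by
  have hx₀ : 1 - x ^ 2 ≠ 0 := (sub_pos.2 hx).ne'
  have h := ((hasDerivAt_id x).const_mul (-2)).mul (hasDerivAt_eval_inv_mul_unitBump (X ^ 2) x)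
  rw [show deriv unitBump = _ from funext deriv_unitBump]
  refine (h.congr_of_eventuallyEq (.of_forall fun y => by simp)).deriv.trans ?_
  simp
  field_simp
  ring

theorem inv_one_sub_sq_pow_mul_unitBump_pos {x : ℝ} (hx : x ^ 2 < 1) (n : ℕ) :
    0 < (1 - x ^ 2)⁻¹ ^ n * unitBump x :=
  mul_pos (pow_pos (inv_pos.2 (sub_pos.2 hx)) n) (unitBump_pos hx)

theorem deriv_unitBump_zero : deriv unitBump 0 = 0 := by simp [deriv_unitBump]

theorem deriv_unitBump_eq_zero {x : ℝ} (hx : x ∉ Ioo (-1) 1) : deriv unitBump x = 0 := by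
  simp [deriv_unitBump, unitBump_eq_zero hx]

theorem unitBump_eq_zero_or_eq_zero_of_deriv_eq_zero {x : ℝ} (hx : deriv unitBump x = 0) :
    unitBump x = 0 ∨ x = 0 := by
  rcases lt_or_ge (x ^ 2) 1 with hlt | hge
  · have := (inv_one_sub_sq_pow_mul_unitBump_pos hlt 2).ne'
    rw [deriv_unitBump] at hx
    exact .inr (by simpa using (mul_eq_zero.1 hx).resolve_right this)
  · exact .inl (unitBump_eq_zero fun h => hge.not_gt (by nlinarith [h.1, h.2]))

theorem deriv_unitBump_nonneg_of_notMem_Ioo {x : ℝ} (hx : x ∉ Ioo 0 1) :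
    0 ≤ deriv unitBump x := by
  rcases le_or_gt x 0 with hx₀ | hx₀
  · rw [deriv_unitBump]
    exact mul_nonneg (by linarith) (mul_nonneg (by positivity) (unitBump_nonneg x))
  · exact (deriv_unitBump_eq_zero fun h => hx ⟨hx₀, h.2⟩).ge

theorem deriv_deriv_unitBump_neg {x : ℝ} (hx : x ^ 4 < 1 / 3) : deriv (deriv unitBump) x < 0 := by
  have hx₁ : x ^ 2 < 1 := by nlinarith
  rw [deriv_deriv_unitBump hx₁]
  exact mul_neg_of_neg_of_pos (by linarith) (inv_one_sub_sq_pow_mul_unitBump_pos hx₁ 4)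

theorem deriv_deriv_unitBump_pos {x : ℝ} (hx : 1 / 3 < x ^ 4) (hx₁ : x ^ 2 < 1) :
    0 < deriv (deriv unitBump) x := by
  rw [deriv_deriv_unitBump hx₁]
  exact mul_pos (by linarith) (inv_one_sub_sq_pow_mul_unitBump_pos hx₁ 4)

theorem continuous_deriv_unitBump : Continuous (deriv unitBump) :=
  (contDiff_unitBump (n := 1)).continuous_deriv le_rfl

theorem exists_inflection_unitBump :
    ∃ m ∈ Ioo (0 : ℝ) 1, (∀ x ∈ Ioo 0 m, deriv (deriv unitBump) x < 0) ∧
      ∀ x ∈ Ioo m 1, 0 < deriv (deriv unitBump) x := by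
  obtain ⟨m, hm₀, hm⟩ : ∃ m : ℝ, 0 < m ∧ m ^ 4 = 1 / 3 :=
    ⟨(1 / 3 : ℝ) ^ ((4 : ℕ) : ℝ)⁻¹, by positivity,
      Real.rpow_inv_natCast_pow (by norm_num) (by norm_num)⟩
  have hm₁ : m < 1 := lt_of_pow_lt_pow_left₀ 4 zero_le_one (by rw [hm]; norm_num)
  refine ⟨m, ⟨hm₀, hm₁⟩, fun x hx => ?_, fun x hx => ?_⟩
  · exact deriv_deriv_unitBump_neg (hm ▸ pow_lt_pow_left₀ hx.2 hx.1.le four_ne_zero)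
  · exact deriv_deriv_unitBump_pos (hm ▸ pow_lt_pow_left₀ hx.1 hm₀.le four_ne_zero)
      (pow_lt_one₀ (hm₀.trans hx.1).le hx.2 two_ne_zero)

theorem exists_deriv_unitBump_eq_iff :
    ∃ c < 0, ∃ a b : ℝ, deriv (deriv unitBump) a < 0 ∧ 0 < deriv (deriv unitBump) b ∧
      ∀ x, deriv unitBump x = c ↔ x = a ∨ x = b := by
  obtain ⟨m, ⟨hm₀, hm₁⟩, hneg, hpos⟩ := exists_inflection_unitBump
  have hcont {s : Set ℝ} : ContinuousOn (deriv unitBump) s := continuous_deriv_unitBump.continuousOn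
  have hanti : StrictAntiOn (deriv unitBump) (Icc 0 m) :=
    strictAntiOn_of_deriv_neg (convex_Icc 0 m) hcont (by simpa using hneg)
  have hmono : StrictMonoOn (deriv unitBump) (Icc m 1) :=
    strictMonoOn_of_deriv_pos (convex_Icc m 1) hcont (by simpa using hpos)
  have hone : deriv unitBump 1 = 0 := deriv_unitBump_eq_zero (by simp)
  obtain ⟨c, hmc, hc⟩ : ∃ c, deriv unitBump m < c ∧ c < 0 :=
    exists_between (hone ▸ hmono ⟨le_rfl, hm₁.le⟩ ⟨hm₁.le, le_rfl⟩ hm₁)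
  obtain ⟨a, ha, b, hb, hab⟩ := exists_eq_iff_of_strictAntiOn_of_strictMonoOn hm₀.le hm₁.le hcont
    hanti hmono hmc (hc.trans_eq deriv_unitBump_zero.symm) (hc.trans_eq hone.symm)
  refine ⟨c, hc, a, b, hneg a ha, hpos b hb, fun x => ?_⟩
  by_cases hx : x ∈ Ioo 0 1
  · exact hab x (Ioo_subset_Icc_self hx)
  · refine iff_of_false (hc.trans_le (deriv_unitBump_nonneg_of_notMem_Ioo hx)).ne' ?_
    rintro (rfl | rfl)
    exacts [hx ⟨ha.1, ha.2.trans hm₁⟩, hx ⟨hm₀.trans hb.1, hb.2⟩]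

end UnitBump

section Line

open Set
open scoped ContDiff

/-- The one-variable model of the perturbation: `φ` is a smooth nonnegative function vanishing
outside `(-1, 1)`, and the critical points of `x ↦ A * x + φ x` are a non-degenerate maximum `a`
and a non-degenerate minimum `b`. -/
structure IsMaxMinPerturbation (A : ℝ) (φ : ℝ → ℝ) (a b : ℝ) : Prop where
  contDiff : ContDiff ℝ ∞ φ
  nonneg : ∀ x, 0 ≤ φ x
  eq_zero : ∀ x ∉ Ioo (-1) 1, φ x = 0
  add_deriv_eq_zero_iff : ∀ x, A + deriv φ x = 0 ↔ x = a ∨ x = b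
  deriv_deriv_neg : deriv (deriv φ) a < 0
  deriv_deriv_pos : 0 < deriv (deriv φ) b

namespace IsMaxMinPerturbation

variable {A a b : ℝ} {φ : ℝ → ℝ}

theorem ne (h : IsMaxMinPerturbation A φ a b) : a ≠ b := by
  rintro rfl
  exact h.deriv_deriv_neg.not_gt h.deriv_deriv_pos

theorem deriv_eq_zero_of_eq_zero (h : IsMaxMinPerturbation A φ a b) {x : ℝ} (hx : φ x = 0) :
    deriv φ x = 0 :=
  IsLocalMin.deriv_eq_zero (.of_forall fun y => hx.trans_le (h.nonneg y))

theorem pos_of_add_deriv_eq_zero (h : IsMaxMinPerturbation A φ a b) (hA : A ≠ 0) {x : ℝ}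
    (hx : A + deriv φ x = 0) : 0 < φ x :=
  (h.nonneg x).lt_of_ne' fun h₀ => hA (by simpa [h.deriv_eq_zero_of_eq_zero h₀] using hx)

theorem pos_left (h : IsMaxMinPerturbation A φ a b) (hA : A ≠ 0) : 0 < φ a :=
  h.pos_of_add_deriv_eq_zero hA ((h.add_deriv_eq_zero_iff a).2 (.inl rfl))

theorem pos_right (h : IsMaxMinPerturbation A φ a b) (hA : A ≠ 0) : 0 < φ b :=
  h.pos_of_add_deriv_eq_zero hA ((h.add_deriv_eq_zero_iff b).2 (.inr rfl))

theorem mem_Ioo_of_pos (h : IsMaxMinPerturbation A φ a b) {x : ℝ} (hx : 0 < φ x) :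
    x ∈ Ioo (-1) 1 :=
  not_imp_comm.1 (h.eq_zero x) hx.ne'

theorem comp_neg (h : IsMaxMinPerturbation A φ a b) :
    IsMaxMinPerturbation (-A) (fun x => φ (-x)) (-a) (-b) := by
  have hderiv : deriv (fun x => φ (-x)) = fun x => -deriv φ (-x) := funext (deriv_comp_neg φ)
  have hderiv₂ (x : ℝ) : deriv (deriv fun x => φ (-x)) x = deriv (deriv φ) (-x) := by
    rw [hderiv, deriv.fun_neg, deriv_comp_neg (deriv φ), neg_neg]
  refine ⟨h.contDiff.comp contDiff_neg, fun x => h.nonneg (-x), fun x hx => h.eq_zero (-x) ?_,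
    fun x => ?_, ?_, ?_⟩
  · simpa [and_comm, neg_lt] using hx
  · rw [hderiv, ← neg_add, neg_eq_zero, h.add_deriv_eq_zero_iff, neg_eq_iff_eq_neg,
      neg_eq_iff_eq_neg]
  · simpa [hderiv₂] using h.deriv_deriv_neg
  · simpa [hderiv₂] using h.deriv_deriv_pos

end IsMaxMinPerturbation

theorem exists_isMaxMinPerturbation_of_pos {A : ℝ} (hA : 0 < A) :
    ∃ φ a b, IsMaxMinPerturbation A φ a b := by
  obtain ⟨c, hc, a, b, ha, hb, hab⟩ := exists_deriv_unitBump_eq_iff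
  have hK : 0 < A / -c := div_pos hA (neg_pos.2 hc)
  have hderiv : deriv (fun x => A / -c * unitBump x) = fun x => A / -c * deriv unitBump x :=
    funext fun x => deriv_const_mul_field _
  have hderiv₂ (x : ℝ) :
      deriv (deriv fun x => A / -c * unitBump x) x = A / -c * deriv (deriv unitBump) x := by
    rw [hderiv, deriv_const_mul_field]
  refine ⟨fun x => A / -c * unitBump x, a, b, contDiff_const.mul contDiff_unitBump,
    fun x => mul_nonneg hK.le (unitBump_nonneg x), fun x hx => by simp [unitBump_eq_zero hx],
    fun x => ?_, ?_, ?_⟩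
  · have hfactor : A + A / -c * deriv unitBump x = A / -c * (deriv unitBump x - c) := by
      field_simp [hc.ne]
      ring
    rw [hderiv, hfactor, mul_eq_zero, or_iff_right hK.ne', sub_eq_zero, hab]
  · simpa [hderiv₂] using mul_neg_of_pos_of_neg hK ha
  · simpa [hderiv₂] using mul_pos hK hb

theorem exists_isMaxMinPerturbation {A : ℝ} (hA : A ≠ 0) :
    ∃ φ a b, IsMaxMinPerturbation A φ a b := by
  rcases hA.lt_or_gt with hneg | hpos
  · obtain ⟨φ, a, b, h⟩ := exists_isMaxMinPerturbation_of_pos (neg_pos.2 hneg)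
    exact ⟨_, _, _, neg_neg A ▸ h.comp_neg⟩
  · exact exists_isMaxMinPerturbation_of_pos hpos

end Line

section Plane

variable {A a b : ℝ} {φ : ℝ → ℝ}

theorem IsMaxMinPerturbation.setOf_fderiv_eq_zero (h : IsMaxMinPerturbation A φ a b) (hA : A ≠ 0)
    (B : ℝ) :
    {p | fderiv ℝ (profileSum (fun x => A * x + B) φ unitBump) p = 0} = {(a, 0), (b, 0)} := by
  rw [setOf_fderiv_profileSum_eq_zero (by fun_prop) (h.contDiff.differentiable (by simp))
    ((contDiff_unitBump (n := 1)).differentiable (by simp)) (by simpa using hA)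
    (fun x => h.deriv_eq_zero_of_eq_zero) deriv_unitBump_zero
    (fun y => unitBump_eq_zero_or_eq_zero_of_deriv_eq_zero)]
  ext ⟨x, y⟩
  simp [unitBump_zero, h.add_deriv_eq_zero_iff, or_and_right]

theorem IsMaxMinPerturbation.hessianForm_eq (h : IsMaxMinPerturbation A φ a b) (B x : ℝ)
    (v w : ℝ × ℝ) :
    hessianForm (profileSum (fun x => A * x + B) φ unitBump) (x, 0) v w =
      deriv (deriv φ) x * (v.1 * w.1) + φ x * deriv (deriv unitBump) 0 * (v.2 * w.2) := by
  have hφ : ContDiff ℝ 2 φ := contDiff_infty.1 h.contDiff 2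
  have haffine : deriv (fun x => A * x + B) = fun _ => A := by
    ext x
    simp
  rw [hessianForm_profileSum_of_deriv_eq_zero (by fun_prop) hφ (contDiff_unitBump (n := 2))
    deriv_unitBump_zero]
  simp [haffine, unitBump_zero]

end Plane

/-- For all reals `A ≠ 0` and `B` there is a smooth function `f̃ : ℝ² → ℝ` agreeing with
`(x, y) ↦ A·x + B` outside the open square `(−1,1)²`, whose set of critical points consists of
exactly two points `p₁ ≠ p₂` inside the square, where `p₁` is a non-degenerate local maximum
(negative definite Hessian) and `p₂` is a non-degenerate saddle (Hessian with negative
determinant). -/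
theorem exists_smooth_perturbation_max_saddle (A B : ℝ) (hA : A ≠ 0) :
    ∃ ftilde : ℝ × ℝ → ℝ, ContDiff ℝ (⊤ : ℕ∞) ftilde ∧
      (∀ p : ℝ × ℝ, p ∉ openSquare → ftilde p = A * p.1 + B) ∧
      ∃ p₁ p₂ : ℝ × ℝ, p₁ ≠ p₂ ∧ p₁ ∈ openSquare ∧ p₂ ∈ openSquare ∧
        {p : ℝ × ℝ | fderiv ℝ ftilde p = 0} = {p₁, p₂} ∧
        (∀ v : ℝ × ℝ, v ≠ 0 → hessianForm ftilde p₁ v v < 0) ∧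
        hessianForm ftilde p₂ (1, 0) (1, 0) * hessianForm ftilde p₂ (0, 1) (0, 1)
          - (hessianForm ftilde p₂ (1, 0) (0, 1)) ^ 2 < 0 := by
  obtain ⟨φ, a, b, h⟩ := exists_isMaxMinPerturbation hA
  have hφa := h.pos_left hA
  have hφb := h.pos_right hA
  have hψ : deriv (deriv unitBump) 0 < 0 := deriv_deriv_unitBump_neg (by norm_num)
  refine ⟨profileSum (fun x => A * x + B) φ unitBump,
    contDiff_profileSum (by fun_prop) h.contDiff contDiff_unitBump, fun p hp => ?_,
    (a, 0), (b, 0), by simpa using h.ne, ⟨h.mem_Ioo_of_pos hφa, by simp⟩,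
    ⟨h.mem_Ioo_of_pos hφb, by simp⟩, h.setOf_fderiv_eq_zero hA B, fun v hv => ?_, ?_⟩
  · rcases not_and_or.1 hp with hx | hy
    · simp [profileSum, h.eq_zero _ hx]
    · simp [profileSum, unitBump_eq_zero hy]
  · rw [h.hessianForm_eq]
    exact mul_self_add_mul_self_neg h.deriv_deriv_neg (mul_neg_of_pos_of_neg hφa hψ) hv
  · simpa [h.hessianForm_eq] using
      mul_neg_of_pos_of_neg h.deriv_deriv_pos (mul_neg_of_pos_of_neg hφb hψ)
end

section
/- Let Ω₂ = {(x,y) ∈ ℝ² : −x² < y < x² and 0 < x < 1}. Then Ω₂ satisfies the segment property at the origin: taking the vector v = (1/4, 0) and the neighbourhood U equal to the open ball of radius 1/4 centred at the origin, one has z + t·v ∈ Ω₂ for every z ∈ closure(Ω₂) ∩ U and every t ∈ (0,1). -/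
/-! The slice of `Ω₂` above the abscissa `x` is the interval `(-x², x²)`, whose two endpoints move
strictly outwards as `x` increases. A limit point of `Ω₂` lies in the closed interval over its
abscissa, so any horizontal move to the right brings it into the open interval over the new
abscissa; the only constraint left is not to cross the line `x = 1`. -/

/-- The cusp domain `Ω₂ = {(x,y) : −x² < y < x², 0 < x < 1} ⊂ ℝ²`. -/
def Omega2 : Set (ℝ × ℝ) :=
  {p : ℝ × ℝ | -p.1 ^ 2 < p.2 ∧ p.2 < p.1 ^ 2 ∧ 0 < p.1 ∧ p.1 < 1}

section RegionBetween

variable {α : Type*} [TopologicalSpace α] {f g : α → ℝ} {s : Set α} {p : α × ℝ}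

theorem fst_mem_closure_of_mem_closure_regionBetween (hp : p ∈ closure (regionBetween f g s)) :
    p.1 ∈ closure s :=
  map_mem_closure continuous_fst hp fun _ hq ↦ hq.1

theorem le_snd_of_mem_closure_regionBetween (hf : ContinuousOn f (closure s))
    (hp : p ∈ closure (regionBetween f g s)) : f p.1 ≤ p.2 :=
  le_on_closure (fun _ hq ↦ hq.2.1.le)
    (hf.comp continuousOn_fst fun _ ↦ fst_mem_closure_of_mem_closure_regionBetween)
    continuousOn_snd hp

theorem snd_le_of_mem_closure_regionBetween (hg : ContinuousOn g (closure s))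
    (hp : p ∈ closure (regionBetween f g s)) : p.2 ≤ g p.1 :=
  le_on_closure (fun _ hq ↦ hq.2.2.le) continuousOn_snd
    (hg.comp continuousOn_fst fun _ ↦ fst_mem_closure_of_mem_closure_regionBetween) hp

theorem mk_mem_regionBetween_of_mem_closure [Preorder α]
    (hf : ContinuousOn f (closure s)) (hf_anti : StrictAntiOn f (closure s))
    (hg : ContinuousOn g (closure s)) (hg_mono : StrictMonoOn g (closure s))
    (hp : p ∈ closure (regionBetween f g s)) {x : α} (hx : x ∈ s) (hpx : p.1 < x) :
    (x, p.2) ∈ regionBetween f g s := by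
  have hp₁ : p.1 ∈ closure s := fst_mem_closure_of_mem_closure_regionBetween hp
  have hx' : x ∈ closure s := subset_closure hx
  have lower : f x < p.2 :=
    (hf_anti hp₁ hx' hpx).trans_le (le_snd_of_mem_closure_regionBetween hf hp)
  have upper : p.2 < g x :=
    (snd_le_of_mem_closure_regionBetween hg hp).trans_lt (hg_mono hp₁ hx' hpx)
  exact ⟨hx, lower, upper⟩

end RegionBetween

theorem Omega2_eq_regionBetween :
    Omega2 = regionBetween (fun x ↦ -x ^ 2) (fun x ↦ x ^ 2) (Set.Ioo 0 1) := by
  ext p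
  simp only [Omega2, regionBetween, Set.mem_ofPred_eq, Set.mem_Ioo]
  tauto

theorem mk_mem_Omega2_of_mem_closure {p : ℝ × ℝ} (hp : p ∈ closure Omega2) {x : ℝ}
    (hpx : p.1 < x) (hx : x < 1) : (x, p.2) ∈ Omega2 := by
  rw [Omega2_eq_regionBetween] at hp ⊢
  have closure_Ioo_eq : closure (Set.Ioo (0 : ℝ) 1) = Set.Icc 0 1 := closure_Ioo zero_ne_one
  have hp₁ : p.1 ∈ Set.Icc (0 : ℝ) 1 :=
    closure_Ioo_eq ▸ fst_mem_closure_of_mem_closure_regionBetween hp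
  have sq_mono : StrictMonoOn (fun x : ℝ ↦ x ^ 2) (closure (Set.Ioo 0 1)) :=
    (pow_left_strictMonoOn₀ two_ne_zero).mono fun _ hy ↦ (closure_Ioo_eq ▸ hy).1
  exact mk_mem_regionBetween_of_mem_closure (by fun_prop) sq_mono.neg (by fun_prop) sq_mono hp
    ⟨hp₁.1.trans_lt hpx, hx⟩ hpx

theorem Omega2_segment_property_general {z : ℝ × ℝ} (hz : z ∈ closure Omega2) {r : ℝ}
    (hr : 0 < r) (hzr : z.1 + r ≤ 1) {t : ℝ} (ht₀ : 0 < t) (ht₁ : t < 1) :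
    z + t • (r, (0 : ℝ)) ∈ Omega2 := by
  have right : z.1 < z.1 + t * r := lt_add_of_pos_right _ (mul_pos ht₀ hr)
  have inside : z.1 + t * r < 1 :=
    (add_lt_add_right (mul_lt_of_lt_one_left hr ht₁) z.1).trans_le hzr
  have translate : z + t • (r, (0 : ℝ)) = (z.1 + t * r, z.2) := by ext <;> simp
  exact translate ▸ mk_mem_Omega2_of_mem_closure hz right inside

/-- `Ω₂` satisfies the segment property at the origin, with the vector `v = (1/4, 0)` and
the neighbourhood equal to the open Euclidean ball of radius `1/4` centred at the origin:
for every `z` in `closure Ω₂` with `z.1² + z.2² < (1/4)²` and every `t ∈ (0,1)`,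
the point `z + t • v` lies in `Ω₂`. -/
theorem Omega2_segment_property :
    ∀ z ∈ closure Omega2, z.1 ^ 2 + z.2 ^ 2 < (1 / 4 : ℝ) ^ 2 →
      ∀ t : ℝ, 0 < t → t < 1 → z + t • ((1 / 4 : ℝ), (0 : ℝ)) ∈ Omega2 := by
  intro z hz hball t ht₀ ht₁
  have hz₁ : z.1 < 1 / 4 :=
    lt_of_pow_lt_pow_left₀ 2 (by norm_num) ((le_add_of_nonneg_right (sq_nonneg z.2)).trans_lt hball)
  exact Omega2_segment_property_general hz (by norm_num) (by linarith) ht₀ ht₁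
end

section
/- Let E be a finite-dimensional real inner product space and let Φ : E → E satisfy Φ(0) = 0 and be differentiable at 0 with derivative equal to the identity map. Let (xₙ) and (yₙ) be sequences of nonzero vectors of E converging to 0 such that the angle between xₙ and yₙ converges to some θ ∈ [0,π]. Then Φ(xₙ) and Φ(yₙ) are nonzero for all sufficiently large n, and the angle between Φ(xₙ) and Φ(yₙ)) converges to θ. -/
open Filter Topology

/-!
To first order `Φ` is its derivative at the critical point, so the error in replacing `Φ` by its
derivative is small compared with the vectors themselves; and two nonzero vectors whose difference
is small compared with either of them make a small angle, by the law of cosines. By the triangle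
inequality for angles, the angle between the images therefore differs by a vanishing amount from
the angle between their linear approximations, which a conformal derivative preserves.
-/

open Asymptotics InnerProductGeometry
open scoped EuclideanGeometry

section Angle

variable {V : Type*} [NormedAddCommGroup V] [InnerProductSpace ℝ V]

lemma two_mul_norm_mul_norm_mul_one_sub_cos_angle_le (u v : V) :
    2 * (‖u‖ * ‖v‖) * (1 - Real.cos (angle u v)) ≤ ‖u - v‖ ^ 2 := by
  have law_cos :=
    norm_sub_sq_eq_norm_sq_add_norm_sq_sub_two_mul_norm_mul_norm_mul_cos_angle u v
  linarith [sq_nonneg (‖u‖ - ‖v‖)]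

lemma abs_angle_sub_angle_le (u v x y : V) :
    |angle u v - angle x y| ≤ angle u x + angle v y := by
  rw [abs_sub_le_iff]
  constructor
  · linarith [angle_le_angle_add_angle u x v, angle_le_angle_add_angle x y v, angle_comm y v]
  · linarith [angle_le_angle_add_angle x u y, angle_le_angle_add_angle u v y, angle_comm x u]

variable {α : Type*} {l : Filter α} {u v x y : α → V}

lemma tendsto_angle_zero_of_isEquivalent (hux : u ~[l] x) (hx : ∀ᶠ a in l, x a ≠ 0) :
    Tendsto (fun a ↦ angle (u a) (x a)) l (𝓝 0) := by
  have hsub : (fun a ↦ ‖u a - x a‖ * ‖u a - x a‖) =o[l] fun a ↦ ‖u a‖ * ‖x a‖ :=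
    (hux.isLittleO.trans_isBigO hux.isBigO_symm).norm_norm.mul hux.isLittleO.norm_norm
  have hcos : Tendsto (fun a ↦ 1 - Real.cos (angle (u a) (x a))) l (𝓝 0) := by
    refine squeeze_zero' (.of_forall fun _ ↦ sub_nonneg.2 (Real.cos_le_one _)) ?_
      hsub.tendsto_div_nhds_zero
    filter_upwards [hx, hux.isBigO_symm.eq_zero_imp] with a hxa hua
    have hpos : 0 < ‖u a‖ * ‖x a‖ :=
      mul_pos (norm_pos_iff.2 fun h ↦ hxa (hua h)) (norm_pos_iff.2 hxa)
    rw [le_div_iff₀ hpos]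
    linarith [two_mul_norm_mul_norm_mul_one_sub_cos_angle_le (u a) (x a),
      sq_nonneg ‖u a - x a‖]
  simpa [Function.comp_def, Real.arccos_cos, angle_nonneg, angle_le_pi] using
    (Real.continuous_arccos.tendsto _).comp (hcos.const_sub 1)

lemma tendsto_angle_sub_angle_of_isEquivalent (hux : u ~[l] x) (hvy : v ~[l] y)
    (hx : ∀ᶠ a in l, x a ≠ 0) (hy : ∀ᶠ a in l, y a ≠ 0) :
    Tendsto (fun a ↦ angle (u a) (v a) - angle (x a) (y a)) l (𝓝 0) :=
  squeeze_zero_norm (fun _ ↦ abs_angle_sub_angle_le _ _ _ _) <| by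
    simpa using (tendsto_angle_zero_of_isEquivalent hux hx).add
      (tendsto_angle_zero_of_isEquivalent hvy hy)

end Angle

lemma exists_antilipschitzWith_of_isConformalMap {𝕜 E F : Type*} [NormedField 𝕜]
    [SeminormedAddCommGroup E] [NormedSpace 𝕜 E] [SeminormedAddCommGroup F] [NormedSpace 𝕜 F]
    {f : E →L[𝕜] F} (hf : IsConformalMap f) : ∃ K, AntilipschitzWith K f := by
  obtain ⟨c, hc, li, rfl⟩ := hf
  refine ⟨‖c‖₊⁻¹, AddMonoidHomClass.antilipschitz_of_bound _ fun z ↦ le_of_eq ?_⟩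
  simp [norm_smul, hc]

theorem angle_map_map_tendsto_general {α E F : Type*}
    [NormedAddCommGroup E] [InnerProductSpace ℝ E] [NormedAddCommGroup F] [InnerProductSpace ℝ F]
    {Φ : E → F} {Φ' : E →L[ℝ] F} {c : E} (hΦ : HasFDerivAt Φ Φ' c) (hΦ' : IsConformalMap Φ')
    {l : Filter α} {x y : α → E} (hx : Tendsto x l (𝓝[≠] c)) (hy : Tendsto y l (𝓝[≠] c))
    {θ : ℝ} (hangle : Tendsto (fun a ↦ ∠ (x a) c (y a)) l (𝓝 θ)) :
    (∀ᶠ a in l, Φ (x a) ≠ Φ c ∧ Φ (y a) ≠ Φ c) ∧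
      Tendsto (fun a ↦ ∠ (Φ (x a)) (Φ c) (Φ (y a))) l (𝓝 θ) := by
  have hanti := exists_antilipschitzWith_of_isConformalMap hΦ'
  have hne : ∀ᶠ p in 𝓝[≠] c, Φ p ≠ Φ c := hΦ.eventually_ne hanti
  refine ⟨(hx.eventually hne).and (hy.eventually hne), ?_⟩
  obtain ⟨K, hK⟩ := hanti
  have hequiv : (Φ · - Φ c) ~[𝓝[≠] c] fun p ↦ Φ' (p - c) :=
    (hΦ.isEquivalent_sub (hK.isUniformInducing Φ'.uniformContinuous).isInducing).mono
      nhdsWithin_le_nhds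
  have hΦ'_ne : ∀ᶠ p in 𝓝[≠] c, Φ' (p - c) ≠ 0 :=
    eventually_mem_nhdsWithin.mono fun p hp ↦
      (map_ne_zero_iff Φ' hΦ'.injective).2 (sub_ne_zero.2 hp)
  have hdiff : Tendsto (fun a ↦ ∠ (Φ (x a)) (Φ c) (Φ (y a)) - ∠ (x a) c (y a)) l (𝓝 0) := by
    simpa [-map_sub, EuclideanGeometry.angle, IsConformalMap.preserves_angle hΦ'] using
      tendsto_angle_sub_angle_of_isEquivalent (hequiv.comp_tendsto hx) (hequiv.comp_tendsto hy)
        (hx.eventually hΦ'_ne) (hy.eventually hΦ'_ne)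
  simpa using hdiff.add hangle

/-- Let `E` be a finite-dimensional real inner product space and `Φ : E → E` with `Φ(0) = 0`,
differentiable at `0` with derivative the identity. If `(xₙ)` and `(yₙ)` are sequences of
nonzero vectors converging to `0` such that the angle between `xₙ` and `yₙ` converges to
`θ ∈ [0,π]`, then `Φ(xₙ)` and `Φ(yₙ)` are eventually nonzero and the angle between `Φ(xₙ)`
and `Φ(yₙ)` converges to `θ`. -/
theorem angle_map_map_tendsto
    {E : Type*} [NormedAddCommGroup E] [InnerProductSpace ℝ E] [FiniteDimensional ℝ E]
    (Φ : E → E) (hΦ0 : Φ 0 = 0)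
    (hΦ : HasFDerivAt Φ (ContinuousLinearMap.id ℝ E) 0)
    (x y : ℕ → E) (hx : ∀ n, x n ≠ 0) (hy : ∀ n, y n ≠ 0)
    (hx0 : Tendsto x atTop (nhds 0)) (hy0 : Tendsto y atTop (nhds 0))
    (θ : ℝ) (hθ : θ ∈ Set.Icc 0 Real.pi)
    (hangle : Tendsto (fun n => InnerProductGeometry.angle (x n) (y n)) atTop (nhds θ)) :
    (∀ᶠ n in atTop, Φ (x n) ≠ 0 ∧ Φ (y n) ≠ 0) ∧
      Tendsto (fun n => InnerProductGeometry.angle (Φ (x n)) (Φ (y n))) atTop (nhds θ) := by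
  simpa [EuclideanGeometry.angle, hΦ0] using angle_map_map_tendsto_general hΦ isConformalMap_id
    (tendsto_nhdsWithin_iff.2 ⟨hx0, .of_forall hx⟩) (tendsto_nhdsWithin_iff.2 ⟨hy0, .of_forall hy⟩)
    (θ := θ) (by simpa [EuclideanGeometry.angle] using hangle)
end

section
/- Let A > 0 and B be real numbers. Let γ : ℝ → ℝ be defined by γ(y) = exp(−1/(1−y²)) for |y| < 1 and γ(y) = 0 for |y| ≥ 1, and set c = −A/γ(0) < 0. Suppose α : ℝ → ℝ is a C^∞ function vanishing outside (−1,1), with ∫_{−1}^{1} α = 0, whose primitive β(x) = ∫_{−1}^{x} α(t) dt is strictly positive on (−1,1), and suppose there exist −1 < x₁ < x₂ < 1 with α > c on (−1,x₁) ∪ (x₂,1), α < c on (x₁,x₂), α(x₁) = α(x₂) = c, and α'(x₁) < 0 < α'(x₂). Then the function f̃(x,y) := A·x + B + β(x)·γ(y) is C^∞ on ℝ², its set of critical points is exactly {(x₁,0), (x₂,0)}, the Hessian of f̃ at (x₁,0) is negative definite (a non-degenerate local maximum), and the Hessian of f̃ at (x₂,0) has negative determinant (a non-degenerate saddle). -/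
/-- The bump function `γ(y) = exp(−1/(1−y²))` for `|y| < 1`, and `γ(y) = 0` for `|y| ≥ 1`. -/
noncomputable def gammaBump (y : ℝ) : ℝ :=
  if |y| < 1 then Real.exp (-(1 / (1 - y ^ 2))) else 0

/-- The primitive `β(x) = ∫_{−1}^x α(t) dt`. -/
noncomputable def betaPrim (α : ℝ → ℝ) (x : ℝ) : ℝ :=
  ∫ t in (-1 : ℝ)..x, α t

/-!
With `α = β'`, critical points of `f̃ = A x + B + β(x) γ(y)` solve `A + α(x) γ(y) = 0` and
`β(x) γ'(y) = 0`. Since `A ≠ 0`, the first equation forces `α(x) ≠ 0` and `γ(y) ≠ 0`. The second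
then puts `y` at the peak `0` of `γ`, so that `x` lies on the level set `α = -A / γ(0)`. There the
mixed second derivative `α(x) γ'(0)` vanishes, the Hessian is diagonal with entries `α'(x) γ(0)`
and `β(x) γ''(0) < 0`, and the sign of `α'(x)` tells a maximum from a saddle.
-/

open scoped ContDiff

/-- The perturbation `f̃(x, y) = A x + B + β(x) γ(y)` of the affine function `A x + B`, for
arbitrary profiles `β` and `γ`. -/
noncomputable def perturbedFunction (A B : ℝ) (β γ : ℝ → ℝ) (p : ℝ × ℝ) : ℝ :=
  A * p.1 + B + β p.1 * γ p.2

section PerturbedFunction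

variable {A B : ℝ} {α β γ γ' : ℝ → ℝ}

theorem contDiff_perturbedFunction {n : ℕ∞ω} (hβ : ContDiff ℝ n β) (hγ : ContDiff ℝ n γ) :
    ContDiff ℝ n (perturbedFunction A B β γ) := by
  unfold perturbedFunction
  fun_prop

theorem fderiv_perturbedFunction_apply {p : ℝ × ℝ} {b c : ℝ} (hβ : HasDerivAt β b p.1)
    (hγ : HasDerivAt γ c p.2) (v : ℝ × ℝ) :
    fderiv ℝ (perturbedFunction A B β γ) p v =
      (A + b * γ p.2) * v.1 + β p.1 * c * v.2 := by
  have hfst : HasFDerivAt Prod.fst (.fst ℝ ℝ ℝ) p := hasFDerivAt_fst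
  have hsnd : HasFDerivAt Prod.snd (.snd ℝ ℝ ℝ) p := hasFDerivAt_snd
  have hf : HasFDerivAt (perturbedFunction A B β γ) _ p :=
    ((hfst.const_mul A).add_const B).add
      ((hβ.comp_hasFDerivAt p hfst).mul (hγ.comp_hasFDerivAt p hsnd))
  rw [hf.fderiv]
  simp only [Function.comp_apply, add_apply, smul_apply, smul_eq_mul,
    ContinuousLinearMap.coe_fst', ContinuousLinearMap.coe_snd']
  ring

theorem fderiv_perturbedFunction_eq_zero_iff {p : ℝ × ℝ} {b c : ℝ} (hβ : HasDerivAt β b p.1)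
    (hγ : HasDerivAt γ c p.2) :
    fderiv ℝ (perturbedFunction A B β γ) p = 0 ↔ A + b * γ p.2 = 0 ∧ β p.1 * c = 0 := by
  refine ⟨fun h => ?_, fun ⟨hx, hy⟩ => ContinuousLinearMap.ext fun v => ?_⟩
  · have happly (v : ℝ × ℝ) : (A + b * γ p.2) * v.1 + β p.1 * c * v.2 = 0 := by
      rw [← fderiv_perturbedFunction_apply hβ hγ, h, zero_apply]
    exact ⟨by simpa using happly (1, 0), by simpa using happly (0, 1)⟩
  · simp [fderiv_perturbedFunction_apply hβ hγ, hx, hy]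

theorem setOf_fderiv_perturbedFunction_eq_zero {y₀ : ℝ} (hA : A ≠ 0)
    (hβ : ∀ x, HasDerivAt β (α x) x) (hγ : ∀ y, HasDerivAt γ (γ' y) y)
    (hβ₀ : ∀ x, α x ≠ 0 → β x ≠ 0) (hγ₀ : γ y₀ ≠ 0)
    (hγ' : ∀ y, γ y ≠ 0 → (γ' y = 0 ↔ y = y₀)) :
    {p | fderiv ℝ (perturbedFunction A B β γ) p = 0} = (α ⁻¹' {-A / γ y₀}) ×ˢ {y₀} := by
  ext ⟨x, y⟩
  simp only [Set.mem_ofPred_eq, Set.mem_prod, Set.mem_preimage, Set.mem_singleton_iff,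
    eq_div_iff hγ₀, fderiv_perturbedFunction_eq_zero_iff (p := (x, y)) (hβ x) (hγ y)]
  constructor
  · rintro ⟨hx, hy⟩
    have hαγ : α x * γ y ≠ 0 := fun h => hA (by simpa [h] using hx)
    have hγ'y : γ' y = 0 :=
      (mul_eq_zero.1 hy).resolve_left (hβ₀ x (left_ne_zero_of_mul hαγ))
    obtain rfl : y = y₀ := (hγ' y (right_ne_zero_of_mul hαγ)).1 hγ'y
    exact ⟨by linarith, rfl⟩
  · rintro ⟨hx, rfl⟩
    exact ⟨by linarith, by rw [(hγ' y hγ₀).2 rfl, mul_zero]⟩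

theorem hessianForm_perturbedFunction {p : ℝ × ℝ} (hβ : ∀ x, HasDerivAt β (α x) x)
    (hγ : ∀ y, HasDerivAt γ (γ' y) y) (hα : DifferentiableAt ℝ α p.1)
    (hγ' : DifferentiableAt ℝ γ' p.2) (v w : ℝ × ℝ) :
    hessianForm (perturbedFunction A B β γ) p v w =
      deriv α p.1 * γ p.2 * (v.1 * w.1) + α p.1 * γ' p.2 * (v.1 * w.2 + v.2 * w.1) +
        β p.1 * deriv γ' p.2 * (v.2 * w.2) := by
  have hfst : HasFDerivAt Prod.fst (.fst ℝ ℝ ℝ) p := hasFDerivAt_fst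
  have hsnd : HasFDerivAt Prod.snd (.snd ℝ ℝ ℝ) p := hasFDerivAt_snd
  have hαγ := (hα.hasDerivAt.comp_hasFDerivAt p hfst).mul ((hγ p.2).comp_hasFDerivAt p hsnd)
  have hβγ' := ((hβ p.1).comp_hasFDerivAt p hfst).mul (hγ'.hasDerivAt.comp_hasFDerivAt p hsnd)
  have hf : HasFDerivAt (fun q : ℝ × ℝ => (A + α q.1 * γ q.2) * v.1 + β q.1 * γ' q.2 * v.2) _ p :=
    ((hαγ.const_add A).mul_const v.1).add (hβγ'.mul_const v.2)
  simp only [hessianForm, fderiv_perturbedFunction_apply (hβ _) (hγ _)]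
  rw [hf.fderiv]
  simp only [Function.comp_apply, add_apply, smul_apply, smul_eq_mul,
    ContinuousLinearMap.coe_fst', ContinuousLinearMap.coe_snd']
  ring

theorem hessianForm_perturbedFunction_neg {x y : ℝ} (hβ : ∀ x, HasDerivAt β (α x) x)
    (hγ : ∀ y, HasDerivAt γ (γ' y) y) (hα : DifferentiableAt ℝ α x)
    (hγ' : DifferentiableAt ℝ γ' y) (hγ'y : γ' y = 0) (hxx : deriv α x * γ y < 0)
    (hyy : β x * deriv γ' y < 0) {v : ℝ × ℝ} (hv : v ≠ 0) :
    hessianForm (perturbedFunction A B β γ) (x, y) v v < 0 := by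
  rw [hessianForm_perturbedFunction (p := (x, y)) hβ hγ hα hγ']
  simp only [hγ'y, mul_zero, zero_mul, add_zero]
  by_cases hv₁ : v.1 = 0
  · have hv₂ : v.2 ≠ 0 := fun hv₂ => hv (Prod.ext hv₁ hv₂)
    exact add_neg_of_nonpos_of_neg (mul_nonpos_of_nonpos_of_nonneg hxx.le (mul_self_nonneg v.1))
      (mul_neg_of_neg_of_pos hyy (mul_self_pos.2 hv₂))
  · exact add_neg_of_neg_of_nonpos (mul_neg_of_neg_of_pos hxx (mul_self_pos.2 hv₁))
      (mul_nonpos_of_nonpos_of_nonneg hyy.le (mul_self_nonneg v.2))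

theorem hessianForm_perturbedFunction_det {x y : ℝ} (hβ : ∀ x, HasDerivAt β (α x) x)
    (hγ : ∀ y, HasDerivAt γ (γ' y) y) (hα : DifferentiableAt ℝ α x)
    (hγ' : DifferentiableAt ℝ γ' y) :
    hessianForm (perturbedFunction A B β γ) (x, y) (1, 0) (1, 0) *
        hessianForm (perturbedFunction A B β γ) (x, y) (0, 1) (0, 1) -
      hessianForm (perturbedFunction A B β γ) (x, y) (1, 0) (0, 1) ^ 2 =
      deriv α x * γ y * (β x * deriv γ' y) - (α x * γ' y) ^ 2 := by
  simp [hessianForm_perturbedFunction (p := (x, y)) hβ hγ hα hγ']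

theorem perturbed_function_max_saddle_general {n : ℕ∞ω} {x₁ x₂ y₀ : ℝ} (hA : A ≠ 0)
    (hβn : ContDiff ℝ n β) (hγn : ContDiff ℝ n γ)
    (hβ : ∀ x, HasDerivAt β (α x) x) (hγ : ∀ y, HasDerivAt γ (γ' y) y)
    (hβpos : ∀ x, α x ≠ 0 → 0 < β x) (hγpos : 0 < γ y₀)
    (hγ' : ∀ y, γ y ≠ 0 → (γ' y = 0 ↔ y = y₀)) (hγ'' : deriv γ' y₀ < 0)
    (hlevel : α ⁻¹' {-A / γ y₀} = {x₁, x₂})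
    (hd₁ : deriv α x₁ < 0) (hd₂ : 0 < deriv α x₂) :
    ContDiff ℝ n (perturbedFunction A B β γ) ∧
      {p | fderiv ℝ (perturbedFunction A B β γ) p = 0} = {(x₁, y₀), (x₂, y₀)} ∧
      (∀ v, v ≠ 0 → hessianForm (perturbedFunction A B β γ) (x₁, y₀) v v < 0) ∧
      hessianForm (perturbedFunction A B β γ) (x₂, y₀) (1, 0) (1, 0) *
          hessianForm (perturbedFunction A B β γ) (x₂, y₀) (0, 1) (0, 1) -
        hessianForm (perturbedFunction A B β γ) (x₂, y₀) (1, 0) (0, 1) ^ 2 < 0 := by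
  have hγ'y₀ : γ' y₀ = 0 := (hγ' y₀ hγpos.ne').2 rfl
  have hγ'd : DifferentiableAt ℝ γ' y₀ := differentiableAt_of_deriv_ne_zero hγ''.ne
  have hβγ'' : ∀ x ∈ ({x₁, x₂} : Set ℝ), β x * deriv γ' y₀ < 0 := by
    intro x hx
    have hαx : α x = -A / γ y₀ := hlevel.ge hx
    exact mul_neg_of_pos_of_neg
      (hβpos x (hαx ▸ div_ne_zero (neg_ne_zero.2 hA) hγpos.ne')) hγ''
  refine ⟨contDiff_perturbedFunction hβn hγn, ?_, fun v hv => ?_, ?_⟩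
  · rw [setOf_fderiv_perturbedFunction_eq_zero hA hβ hγ (fun x hx => (hβpos x hx).ne') hγpos.ne'
      hγ', hlevel, Set.prod_singleton, Set.image_pair]
  · exact hessianForm_perturbedFunction_neg hβ hγ (differentiableAt_of_deriv_ne_zero hd₁.ne) hγ'd
      hγ'y₀ (mul_neg_of_neg_of_pos hd₁ hγpos) (hβγ'' x₁ (Set.mem_insert _ _)) hv
  · rw [hessianForm_perturbedFunction_det hβ hγ (differentiableAt_of_deriv_ne_zero hd₂.ne') hγ'd,
      hγ'y₀, mul_zero, zero_pow two_ne_zero, sub_zero]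
    exact mul_neg_of_pos_of_neg (mul_pos hd₂ hγpos) (hβγ'' x₂ (Set.mem_insert_of_mem _ rfl))

end PerturbedFunction

theorem gammaBump_eq_expNegInvGlue (y : ℝ) : gammaBump y = expNegInvGlue (1 - y ^ 2) := by
  simp only [gammaBump, expNegInvGlue, ← sq_lt_one_iff_abs_lt_one, one_div, ← not_lt, ite_not,
    sub_pos]

theorem gammaBump_zero_pos : 0 < gammaBump 0 := by
  rw [gammaBump_eq_expNegInvGlue]
  exact expNegInvGlue.pos_of_pos (by norm_num)

theorem contDiff_gammaBump {n : ℕ∞} : ContDiff ℝ n gammaBump := by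
  rw [funext gammaBump_eq_expNegInvGlue]
  exact expNegInvGlue.contDiff.comp (by fun_prop)

-- At `y = ±1` the factor `(1 - y ^ 2)⁻¹` is `0⁻¹ = 0`, and the formula gives the correct value `0`.
theorem hasDerivAt_gammaBump (y : ℝ) :
    HasDerivAt gammaBump (y * (-2 * ((1 - y ^ 2)⁻¹ ^ 2 * gammaBump y))) y := by
  have hsq : HasDerivAt (fun y : ℝ => 1 - y ^ 2) (-(2 * y)) y := by
    simpa using (hasDerivAt_pow 2 y).const_sub 1
  have hglue := (expNegInvGlue.hasDerivAt_polynomial_eval_inv_mul 1 (1 - y ^ 2)).comp y hsq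
  rw [funext gammaBump_eq_expNegInvGlue]
  convert! hglue using 1
  · ext z
    simp
  · simp only [Polynomial.derivative_one, sub_zero, mul_one, Polynomial.eval_pow, Polynomial.eval_X]
    ring

theorem deriv_gammaBump_eq_zero_iff {y : ℝ} (hy : gammaBump y ≠ 0) :
    deriv gammaBump y = 0 ↔ y = 0 := by
  have hsq : 1 - y ^ 2 ≠ 0 := fun h =>
    hy (by rw [gammaBump_eq_expNegInvGlue, h, expNegInvGlue.zero])
  simp [(hasDerivAt_gammaBump y).deriv, hy, hsq]

theorem deriv_deriv_gammaBump_zero : deriv (deriv gammaBump) 0 = -2 * gammaBump 0 := by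
  have hsq : (1 - (0 : ℝ) ^ 2) ≠ 0 := by norm_num
  have hγ : DifferentiableAt ℝ gammaBump 0 := (hasDerivAt_gammaBump 0).differentiableAt
  have hd : DifferentiableAt ℝ (fun y : ℝ => -2 * ((1 - y ^ 2)⁻¹ ^ 2 * gammaBump y)) 0 := by
    fun_prop (disch := assumption)
  rw [funext fun y => (hasDerivAt_gammaBump y).deriv, deriv_fun_mul differentiableAt_fun_id hd]
  simp

theorem hasDerivAt_betaPrim {α : ℝ → ℝ} (hα : Continuous α) (x : ℝ) :
    HasDerivAt (betaPrim α) (α x) x :=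
  (hα.integral_hasStrictDerivAt (-1) x).hasDerivAt

theorem contDiff_betaPrim {α : ℝ → ℝ} {n : ℕ∞} (hα : ContDiff ℝ n α) :
    ContDiff ℝ (n + 1) (betaPrim α) := by
  have hβ := hasDerivAt_betaPrim hα.continuous
  refine contDiff_succ_iff_deriv.2 ⟨fun x => (hβ x).differentiableAt, by simp, ?_⟩
  rwa [funext fun x => (hβ x).deriv]

theorem preimage_singleton_eq_pair_of_crossing {ι κ : Type*} [LinearOrder ι] [Preorder κ]
    {f : ι → κ} {c : κ} {l r a b : ι} (hout : ∀ x, x ∉ Set.Ioo l r → f x ≠ c)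
    (hleft : ∀ x, l < x → x < a → c < f x) (ha : f a = c)
    (hmid : ∀ x, a < x → x < b → f x < c) (hb : f b = c)
    (hright : ∀ x, b < x → x < r → c < f x) :
    f ⁻¹' {c} = {a, b} := by
  refine Set.Subset.antisymm (fun x (hx : f x = c) => ?_) (Set.pair_subset ha hb)
  obtain ⟨hl, hr⟩ : x ∈ Set.Ioo l r := by_contra fun h => hout x h hx
  rcases lt_trichotomy x a with hxa | rfl | hax
  · exact absurd hx.symm (hleft x hl hxa).ne
  · exact Set.mem_insert x {b}
  rcases lt_trichotomy x b with hxb | rfl | hbx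
  · exact absurd hx (hmid x hax hxb).ne
  · exact Set.mem_insert_of_mem a rfl
  · exact absurd hx.symm (hright x hbx hr).ne

/-- Let `A > 0`, `B ∈ ℝ`, `c = −A/γ(0)`, and let `α` be a smooth function supported in
`(−1,1)` with vanishing integral, strictly positive primitive `β` on `(−1,1)`, crossing the
level `c` exactly twice transversally at `x₁ < x₂` (from above at `x₁`, from below at `x₂`).
Then `f̃(x,y) = A·x + B + β(x)·γ(y)` is smooth, its critical points are exactly `(x₁,0)` and
`(x₂,0)`, the Hessian at `(x₁,0)` is negative definite, and the Hessian at `(x₂,0)` has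
negative determinant. -/
theorem perturbed_function_max_saddle
    (A B : ℝ) (hA : 0 < A) (α : ℝ → ℝ) (x₁ x₂ : ℝ)
    (hsmooth : ContDiff ℝ (⊤ : ℕ∞) α)
    (hsupp : ∀ x : ℝ, x ∉ Set.Ioo (-1 : ℝ) 1 → α x = 0)
    (hint : (∫ t in (-1 : ℝ)..1, α t) = 0)
    (hbeta : ∀ x ∈ Set.Ioo (-1 : ℝ) 1, 0 < betaPrim α x)
    (h1 : -1 < x₁) (h12 : x₁ < x₂) (h2 : x₂ < 1)
    (hgt1 : ∀ x, -1 < x → x < x₁ → -A / gammaBump 0 < α x)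
    (heq1 : α x₁ = -A / gammaBump 0)
    (hlt : ∀ x, x₁ < x → x < x₂ → α x < -A / gammaBump 0)
    (heq2 : α x₂ = -A / gammaBump 0)
    (hgt2 : ∀ x, x₂ < x → x < 1 → -A / gammaBump 0 < α x)
    (hd1 : deriv α x₁ < 0) (hd2 : 0 < deriv α x₂) :
    ContDiff ℝ (⊤ : ℕ∞) (fun p : ℝ × ℝ => A * p.1 + B + betaPrim α p.1 * gammaBump p.2) ∧
      {p : ℝ × ℝ |
          fderiv ℝ (fun p : ℝ × ℝ => A * p.1 + B + betaPrim α p.1 * gammaBump p.2) p = 0}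
        = {(x₁, 0), (x₂, 0)} ∧
      (∀ v : ℝ × ℝ, v ≠ 0 →
        hessianForm (fun p : ℝ × ℝ => A * p.1 + B + betaPrim α p.1 * gammaBump p.2)
          (x₁, 0) v v < 0) ∧
      hessianForm (fun p : ℝ × ℝ => A * p.1 + B + betaPrim α p.1 * gammaBump p.2)
          (x₂, 0) (1, 0) (1, 0) *
        hessianForm (fun p : ℝ × ℝ => A * p.1 + B + betaPrim α p.1 * gammaBump p.2)
          (x₂, 0) (0, 1) (0, 1) -
        (hessianForm (fun p : ℝ × ℝ => A * p.1 + B + betaPrim α p.1 * gammaBump p.2)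
          (x₂, 0) (1, 0) (0, 1)) ^ 2 < 0 := by
  have hc : -A / gammaBump 0 ≠ 0 := div_ne_zero (neg_ne_zero.2 hA.ne') gammaBump_zero_pos.ne'
  have hlevel : α ⁻¹' {-A / gammaBump 0} = {x₁, x₂} :=
    preimage_singleton_eq_pair_of_crossing (fun x hx => hsupp x hx ▸ hc.symm) hgt1 heq1 hlt heq2
      hgt2
  exact perturbed_function_max_saddle_general hA.ne' ((contDiff_betaPrim hsmooth).of_le le_self_add)
    contDiff_gammaBump (hasDerivAt_betaPrim hsmooth.continuous)
    (fun y => (hasDerivAt_gammaBump y).differentiableAt.hasDerivAt)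
    (fun x hx => hbeta x (not_imp_comm.1 (hsupp x) hx)) gammaBump_zero_pos
    (fun _ => deriv_gammaBump_eq_zero_iff)
    (deriv_deriv_gammaBump_zero ▸ mul_neg_of_neg_of_pos (by norm_num) gammaBump_zero_pos)
    hlevel hd1 hd2
end
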